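/- For every integer k ≥ 2 there exists a constant C > 0 such that for every digit block B of length k and every N ∈ ℕ with N ≥ 1, |occ(c, B, N) − N·10^{−k}| ≤ C · 10^{n(N)−k}, where the constant C does not depend on B. -/

import Mathlib

open scoped Classical

/-- The `i`-th decimal digit (for `i ≥ 1`) of a real number `α`, using the floor
convention, which for numbers admitting two decimal expansions selects the
expansion ending in a tail of `0`s. -/
noncomputable def digit (α : ℝ) (i : ℕ) : ℕ := (⌊α * 10 ^ i⌋ % 10).toNat

/-- Number of occurrences of the digit block `B` (of length `k`) as consecutive
digits among the first `N` decimal digits of `α`: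
`occ α B N = #{i : 1 ≤ i ≤ N - k + 1 ∧ (α_i, …, α_{i+k-1}) = B}`. -/
noncomputable def occ {k : ℕ} (α : ℝ) (B : Fin k → Fin 10) (N : ℕ) : ℕ :=
  ((Finset.Icc 1 N).filter fun i =>
    i + k ≤ N + 1 ∧ ∀ j : Fin k, digit α (i + (j : ℕ)) = (B j : ℕ)).card

/-- Discrepancy of the first `N` terms of a sequence `(x_n)_{n ≥ 1}` of points of `[0,1)`:
the supremum over `0 ≤ a < b < 1` of `|#{n ≤ N : x n ∈ [a,b)}/N - (b - a)|`. -/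
noncomputable def discSeq (x : ℕ → ℝ) (N : ℕ) : ℝ :=
  sSup {d : ℝ | ∃ a b : ℝ, 0 ≤ a ∧ a < b ∧ b < 1 ∧
    d = |(((Finset.Icc 1 N).filter fun n => x n ∈ Set.Ico a b).card : ℝ) / N - (b - a)|}

/-- Discrepancy of a real number for base 10: the discrepancy of the sequence
`(10^(n-1) α mod 1)_{n ≥ 1}`. -/
noncomputable def D (α : ℝ) (N : ℕ) : ℝ :=
  discSeq (fun n => Int.fract (10 ^ (n - 1) * α)) N

/-- `T v` is the total number of digits in the concatenation of the decimal
representations of `1, 2, …, v`. -/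
def T (v : ℕ) : ℕ := ∑ j ∈ Finset.Icc 1 v, (Nat.digits 10 j).length

/-- The Champernowne constant `c = 0.123456789101112…`, the concatenation of the
positive integers in base 10: the term `m` ends at decimal position `T m`. -/
noncomputable def champ : ℝ := ∑' m : ℕ, (m : ℝ) / 10 ^ T m

/-- `vOf N` is the least `v` with `T v ≥ N` (the term of the concatenation
containing the `N`-th digit). -/
noncomputable def vOf (N : ℕ) : ℕ := sInf {v | N ≤ T v}

/-- `nOf N` is the number of decimal digits of `vOf N`. -/
noncomputable def nOf (N : ℕ) : ℕ := (Nat.digits 10 (vOf N)).length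

/-- Number of non-overlapping occurrences of the block `B` (length `k`) in the string
`s_ℓ` (the concatenation of all `ℓ`-digit integers in increasing order): the number of
pairs `(y, j)` with `10^(ℓ-1) ≤ y < 10^ℓ`, `1 ≤ j ≤ ℓ - k + 1`, such that the digits of
`y` in positions `j, …, j + k - 1` (counted from the left) equal `B`. -/
def occNoSeg {k : ℕ} (B : Fin k → Fin 10) (ℓ : ℕ) : ℕ :=
  ((Finset.Ico (10 ^ (ℓ - 1)) (10 ^ ℓ) ×ˢ Finset.Icc 1 (ℓ - k + 1)).filter fun p =>
    ∀ i : Fin k, p.1 / 10 ^ (ℓ - (p.2 + (i : ℕ))) % 10 = (B i : ℕ)).card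

/-- Number of occurrences of the block `B` (length `k ≤ ℓ`) in the string `s_ℓ` that
straddle the boundary between two consecutive `ℓ`-digit terms `y` and `y + 1`:
the number of pairs `(y, j)` with `10^(ℓ-1) ≤ y < 10^ℓ - 1` and `1 ≤ j ≤ k - 1` such
that the last `j` digits of `y` are `(b₁, …, b_j)` and the first `k - j` digits of
`y + 1` are `(b_{j+1}, …, b_k)`. -/
def occOSeg {k : ℕ} (B : Fin k → Fin 10) (ℓ : ℕ) : ℕ :=
  ((Finset.Ico (10 ^ (ℓ - 1)) (10 ^ ℓ - 1) ×ˢ Finset.Ico 1 k).filter fun p =>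
    (∀ i : Fin k, (i : ℕ) < p.2 → p.1 / 10 ^ (p.2 - 1 - (i : ℕ)) % 10 = (B i : ℕ)) ∧
    (∀ i : Fin k, p.2 ≤ (i : ℕ) →
      (p.1 + 1) / 10 ^ (ℓ - 1 - ((i : ℕ) - p.2)) % 10 = (B i : ℕ))).card

/-- The integer whose decimal representation is the concatenation of those of `1, …, y`. -/
def concat : ℕ → ℕ
  | 0 => 0
  | y + 1 => concat y * 10 ^ (Nat.digits 10 (y + 1)).length + (y + 1)

lemma T_succ (y : ℕ) : T (y + 1) = T y + (Nat.digits 10 (y + 1)).length := by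
  unfold T
  rw [Finset.sum_Icc_succ_top (by omega)]

lemma T_zero : T 0 = 0 := by simp [T]

lemma lt_length_digits_iff (e y : ℕ) : e < (Nat.digits 10 y).length ↔ 10 ^ e ≤ y :=
  Nat.lt_digits_length_iff (by norm_num) y

lemma le_T (y : ℕ) : y ≤ T y := by
  induction y with
  | zero => simp
  | succ y ih =>
    rw [T_succ]
    have := (lt_length_digits_iff 0 (y + 1)).2 (by simp)
    omega

lemma sum_range_champ (y : ℕ) :
    ∑ m ∈ Finset.range (y + 1), (m : ℝ) / 10 ^ T m = (concat y : ℝ) / 10 ^ T y := by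
  induction y with
  | zero => simp [concat]
  | succ y ih =>
    rw [Finset.sum_range_succ, ih, T_succ, concat]
    push_cast
    rw [pow_add]
    field_simp

lemma concat_succ_add_one_le (y : ℕ) :
    ((concat (y + 1) : ℝ) + 1) / 10 ^ T (y + 1) ≤ ((concat y : ℝ) + 1) / 10 ^ T y := by
  have h : y + 1 < 10 ^ (Nat.digits 10 (y + 1)).length :=
    Nat.lt_base_pow_length_digits (by norm_num)
  rw [div_le_div_iff₀ (by positivity) (by positivity), T_succ, concat, pow_add]
  have h' : ((y : ℝ) + 1) + 1 ≤ 10 ^ (Nat.digits 10 (y + 1)).length := by exact_mod_cast h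
  have hp : (0 : ℝ) < 10 ^ T y := by positivity
  push_cast
  nlinarith

lemma concat_succ_add_one_lt {y : ℕ} (hy : Even (y + 1)) :
    ((concat (y + 1) : ℝ) + 1) / 10 ^ T (y + 1) < ((concat y : ℝ) + 1) / 10 ^ T y := by
  have h : y + 1 < 10 ^ (Nat.digits 10 (y + 1)).length :=
    Nat.lt_base_pow_length_digits (by norm_num)
  have hL : (Nat.digits 10 (y + 1)).length ≠ 0 := by
    have := (lt_length_digits_iff 0 (y + 1)).2 (by simp)
    omega
  have he : Even (10 ^ (Nat.digits 10 (y + 1)).length) :=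
    Even.pow_of_ne_zero (by decide) hL
  have h2 : y + 1 + 1 < 10 ^ (Nat.digits 10 (y + 1)).length := by
    generalize 10 ^ (Nat.digits 10 (y + 1)).length = q at *
    obtain ⟨a, ha⟩ := hy
    obtain ⟨b, hb⟩ := he
    omega
  rw [div_lt_div_iff₀ (by positivity) (by positivity), T_succ, concat, pow_add]
  have h' : ((y : ℝ) + 1) + 1 < 10 ^ (Nat.digits 10 (y + 1)).length := by exact_mod_cast h2
  have hp : (0 : ℝ) < 10 ^ T y := by positivity
  push_cast
  nlinarith

lemma antitone_concat_add_one : Antitone fun y => ((concat y : ℝ) + 1) / 10 ^ T y :=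
  antitone_nat_of_succ_le concat_succ_add_one_le

lemma summable_champ : Summable fun m : ℕ => (m : ℝ) / 10 ^ T m := by
  refine summable_of_sum_range_le (c := 1) (fun m => by positivity) fun n => ?_
  have h1 : ∑ m ∈ Finset.range n, (m : ℝ) / 10 ^ T m
      ≤ ∑ m ∈ Finset.range (n + 1), (m : ℝ) / 10 ^ T m := by
    rw [Finset.sum_range_succ]
    have : 0 ≤ (n : ℝ) / 10 ^ T n := by positivity
    linarith
  have h2 := antitone_concat_add_one (Nat.zero_le n)
  simp only [concat, T_zero] at h2
  rw [sum_range_champ] at h1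
  rw [add_div] at h2
  have : (0 : ℝ) ≤ 1 / 10 ^ T n := by positivity
  norm_num at h2
  rw [one_div] at this
  linarith

lemma concat_div_le_champ (y : ℕ) : (concat y : ℝ) / 10 ^ T y ≤ champ := by
  rw [← sum_range_champ]
  exact summable_champ.sum_le_tsum _ fun m _ => by positivity

lemma champ_le_concat_add_one_div (y : ℕ) : champ ≤ ((concat y : ℝ) + 1) / 10 ^ T y := by
  refine le_of_tendsto' (summable_champ.hasSum.tendsto_sum_nat.comp
    (Filter.tendsto_add_atTop_nat (y + 1))) fun n => ?_
  simp only [Function.comp]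
  rw [← add_assoc, sum_range_champ]
  refine le_trans ?_ (antitone_concat_add_one (Nat.le_add_left y n))
  simp only
  gcongr
  linarith

lemma champ_lt_concat_add_one_div (y : ℕ) : champ < ((concat y : ℝ) + 1) / 10 ^ T y := by
  rcases Nat.even_or_odd (y + 1) with h | h
  · exact (champ_le_concat_add_one_div _).trans_lt (concat_succ_add_one_lt h)
  · exact ((champ_le_concat_add_one_div _).trans_lt (concat_succ_add_one_lt h.add_one)).trans_le
      (concat_succ_add_one_le y)

lemma floor_champ_mul_pow_T (y : ℕ) : ⌊champ * 10 ^ T y⌋₊ = concat y := by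
  rw [Nat.floor_eq_iff (mul_nonneg (le_trans (by positivity) (concat_div_le_champ 0))
    (by positivity))]
  exact ⟨(div_le_iff₀ (by positivity)).1 (concat_div_le_champ y),
    (lt_div_iff₀ (by positivity)).1 (champ_lt_concat_add_one_div y)⟩

lemma concat_div_pow_mod {e y : ℕ} (he : e < (Nat.digits 10 y).length) :
    concat y / 10 ^ e % 10 = y / 10 ^ e % 10 := by
  cases y with
  | zero => simp at he
  | succ y =>
    obtain ⟨d, hd⟩ := Nat.exists_eq_add_of_lt he
    have : concat (y + 1) = (y + 1) + 10 ^ e * (10 * (concat y * 10 ^ d)) := by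
      rw [concat, hd]
      ring
    rw [this, Nat.add_mul_div_left _ _ (by positivity), Nat.add_mul_mod_self_left]

lemma length_digits_le_T (y : ℕ) : (Nat.digits 10 y).length ≤ T y := by
  cases y with
  | zero => simp
  | succ y => rw [T_succ]; omega

/-- The digit of `champ` lying `e` places before the end of the term `y`. -/
lemma digit_champ {e y : ℕ} (he : e < (Nat.digits 10 y).length) :
    digit champ (T y - e) = y / 10 ^ e % 10 := by
  have heT : e ≤ T y := he.le.trans (length_digits_le_T y)
  have hc : (0 : ℝ) ≤ champ := le_trans (by positivity) (concat_div_le_champ 0)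
  have h1 : champ * 10 ^ (T y - e) = champ * 10 ^ T y / ((10 ^ e : ℕ) : ℝ) := by
    rw [eq_div_iff (by positivity)]
    push_cast
    rw [mul_assoc, ← pow_add, Nat.sub_add_cancel heT]
  have h2 : ⌊champ * 10 ^ (T y - e)⌋₊ = concat y / 10 ^ e := by
    rw [h1, Nat.floor_div_natCast, floor_champ_mul_pow_T]
  have h3 : ⌊champ * 10 ^ (T y - e)⌋ = ((concat y / 10 ^ e : ℕ) : ℤ) := by
    rw [← h2, Int.natCast_floor_eq_floor (by positivity)]
  rw [digit, h3, ← concat_div_pow_mod he]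
  omega

lemma sum_Icc_T (f : ℕ → ℝ) (v : ℕ) :
    ∑ i ∈ Finset.Icc 1 (T v), f i =
      ∑ y ∈ Finset.Icc 1 v, ∑ e ∈ Finset.range (Nat.digits 10 y).length, f (T y - e) := by
  induction v with
  | zero => simp [T_zero]
  | succ v ih =>
    rw [Finset.sum_Icc_succ_top (by omega), ← ih, T_succ]
    generalize (Nat.digits 10 (v + 1)).length = L
    have key : ∀ L, ∑ i ∈ Finset.Icc 1 (T v + L), f i =
        ∑ i ∈ Finset.Icc 1 (T v), f i + ∑ e ∈ Finset.range L, f (T v + 1 + e) := by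
      intro L
      induction L with
      | zero => simp
      | succ L ihL =>
        rw [← add_assoc, Finset.sum_Icc_succ_top (by omega), ihL, Finset.sum_range_succ, add_assoc,
          show T v + L + 1 = T v + 1 + L by ring]
    rw [key, ← Finset.sum_range_reflect]
    congr 1
    refine Finset.sum_congr rfl fun e he => ?_
    rw [Finset.mem_range] at he
    congr 1
    omega

lemma abs_sum_range_le_of_periodic {f : ℕ → ℝ} {p : ℕ} (hp : 0 < p) (hf : Function.Periodic f p)
    (h0 : ∑ i ∈ Finset.range p, f i = 0) (h1 : ∀ i, |f i| ≤ 1) (n : ℕ) :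
    |∑ i ∈ Finset.range n, f i| ≤ p := by
  have hq : ∀ q r, ∑ i ∈ Finset.range (q * p + r), f i = ∑ i ∈ Finset.range r, f i := by
    intro q
    induction q with
    | zero => simp
    | succ q ih =>
      intro r
      rw [show (q + 1) * p + r = q * p + (p + r) by ring, ih, Finset.sum_range_add, h0, zero_add]
      refine Finset.sum_congr rfl fun i _ => ?_
      rw [add_comm p i, hf]
  rw [← Nat.div_add_mod' n p, hq]
  calc |∑ i ∈ Finset.range (n % p), f i| ≤ ∑ i ∈ Finset.range (n % p), |f i| :=
        Finset.abs_sum_le_sum_abs _ _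
    _ ≤ ∑ i ∈ Finset.range (n % p), (1 : ℝ) := Finset.sum_le_sum fun i _ => h1 i
    _ = (n % p : ℕ) := by simp
    _ ≤ p := by exact_mod_cast (Nat.mod_lt n hp).le

lemma abs_sum_Ico_le_of_periodic {f : ℕ → ℝ} {p : ℕ} (hp : 0 < p) (hf : Function.Periodic f p)
    (h0 : ∑ i ∈ Finset.range p, f i = 0) (h1 : ∀ i, |f i| ≤ 1) (m n : ℕ) :
    |∑ i ∈ Finset.Ico m n, f i| ≤ 2 * p := by
  rcases le_total m n with h | h
  · rw [Finset.sum_Ico_eq_sub _ h]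
    have := abs_sum_range_le_of_periodic hp hf h0 h1 n
    have := abs_sum_range_le_of_periodic hp hf h0 h1 m
    exact (abs_sub _ _).trans (by linarith)
  · simp [Finset.Ico_eq_empty_of_le h]

/-- The integer with decimal representation `B`, leading zeros allowed. -/
noncomputable def blockVal {k : ℕ} (B : Fin k → Fin 10) : ℕ :=
  (finFunctionFinEquiv (B ∘ Fin.rev) : Fin (10 ^ k))

lemma mod_pow_eq_blockVal_iff {k : ℕ} (B : Fin k → Fin 10) (z : ℕ) :
    z % 10 ^ k = blockVal B ↔ ∀ j : Fin k, z / 10 ^ (k - 1 - (j : ℕ)) % 10 = (B j : ℕ) := by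
  have hz : z % 10 ^ k < 10 ^ k := Nat.mod_lt _ (by positivity)
  have h1 : z % 10 ^ k = blockVal B ↔
      finFunctionFinEquiv.symm (⟨z % 10 ^ k, hz⟩ : Fin (10 ^ k)) = B ∘ Fin.rev := by
    rw [Equiv.symm_apply_eq, Fin.ext_iff, blockVal]
  have h2 : ∀ i : Fin k, z % 10 ^ k / 10 ^ (i : ℕ) % 10 = z / 10 ^ (i : ℕ) % 10 := by
    intro i
    obtain ⟨d, hd⟩ := Nat.exists_eq_add_of_lt i.2
    conv_rhs => rw [← Nat.mod_add_div z (10 ^ k)]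
    have hpow : 10 ^ k = 10 ^ (i : ℕ) * (10 * 10 ^ d) := by
      conv_lhs => rw [hd]
      ring
    have hmul : 10 ^ k * (z / 10 ^ k) = 10 ^ (i : ℕ) * (10 * (10 ^ d * (z / 10 ^ k))) := by
      generalize z / 10 ^ k = w
      rw [hpow]
      ring
    rw [hmul, Nat.add_mul_div_left _ _ (by positivity), Nat.add_mul_mod_self_left]
  rw [h1, funext_iff, ← Fin.revPerm.forall_congr_right]
  refine forall_congr' fun j => ?_
  rw [Fin.ext_iff, finFunctionFinEquiv_symm_apply_val]
  rw [h2]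
  simp only [Fin.revPerm_apply, Function.comp, Fin.rev_rev, Fin.val_rev]
  rw [show k - (↑j + 1) = k - 1 - (j : ℕ) by omega]

lemma card_filter_div_mod_eq {a k b : ℕ} (hb : b < 10 ^ k) :
    ((Finset.range (10 ^ (a + k))).filter fun y => y / 10 ^ a % 10 ^ k = b).card = 10 ^ a := by
  have : ((Finset.range (10 ^ (a + k))).filter fun y => y / 10 ^ a % 10 ^ k = b) =
      Finset.Ico (b * 10 ^ a) ((b + 1) * 10 ^ a) := by
    ext y
    rw [Finset.mem_filter, Finset.mem_range, Finset.mem_Ico, ← Nat.le_div_iff_mul_le (by positivity),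
      ← Nat.div_lt_iff_lt_mul (by positivity), pow_add, mul_comm, ← Nat.div_lt_iff_lt_mul (by positivity)]
    constructor
    · rintro ⟨h1, h2⟩
      rw [Nat.mod_eq_of_lt h1] at h2
      omega
    · rintro ⟨h1, h2⟩
      have h3 : y / 10 ^ a = b := by omega
      rw [h3, Nat.mod_eq_of_lt hb]
      exact ⟨hb, rfl⟩
  rw [this, Nat.card_Ico, add_mul, one_mul, Nat.add_sub_cancel_left]

lemma abs_ite_sub_le_one (p : Prop) [Decidable p] (k : ℕ) :
    |(if p then (1 : ℝ) else 0) - 1 / 10 ^ k| ≤ 1 := by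
  have h0 : (0 : ℝ) ≤ 1 / 10 ^ k := by positivity
  have h1 : (1 : ℝ) / 10 ^ k ≤ 1 := by
    rw [div_le_one (by positivity)]
    exact one_le_pow₀ (by norm_num)
  rw [abs_le]
  split_ifs <;> constructor <;> linarith

/-- Each `k`-digit value is equidistributed, over an interval of integers, among the digits
in places `a, …, a + k - 1`. -/
lemma abs_sum_Ico_div_mod_le {a k b : ℕ} (hb : b < 10 ^ k) (m n : ℕ) :
    |∑ y ∈ Finset.Ico m n, ((if y / 10 ^ a % 10 ^ k = b then (1 : ℝ) else 0) - 1 / 10 ^ k)| ≤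
      2 * 10 ^ (a + k) := by
  have h := abs_sum_Ico_le_of_periodic (p := 10 ^ (a + k))
    (f := fun y => (if y / 10 ^ a % 10 ^ k = b then (1 : ℝ) else 0) - 1 / 10 ^ k)
    (by positivity) ?_ ?_ (fun i => abs_ite_sub_le_one _ _) m n
  · simpa using h
  · intro y
    simp only
    rw [pow_add, Nat.add_mul_div_left _ _ (by positivity), Nat.add_mod_right]
  · rw [Finset.sum_sub_distrib, Finset.sum_boole, card_filter_div_mod_eq hb]
    simp [pow_add]

lemma block_match_iff {k : ℕ} (hk : 1 ≤ k) (B : Fin k → Fin 10) {e y : ℕ} (hke : k - 1 ≤ e)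
    (he : e < (Nat.digits 10 y).length) :
    (∀ j : Fin k, digit champ (T y - e + (j : ℕ)) = (B j : ℕ)) ↔
      y / 10 ^ (e + 1 - k) % 10 ^ k = blockVal B := by
  rw [mod_pow_eq_blockVal_iff]
  refine forall_congr' fun j => ?_
  have hj := j.2
  have hT := length_digits_le_T y
  rw [show T y - e + (j : ℕ) = T y - (e - j) by omega, digit_champ (by omega),
    Nat.div_div_eq_div_mul, ← pow_add, show e + 1 - k + (k - 1 - (j : ℕ)) = e - j by omega]

lemma sum_range_two_mul_pow_le (n : ℕ) :
    ∑ e ∈ Finset.range n, (2 * 10 ^ (e + 1) : ℝ) ≤ 10 * 10 ^ n := by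
  induction n with
  | zero => simp
  | succ n ih =>
    rw [Finset.sum_range_succ, pow_succ]
    have : (0 : ℝ) < 10 ^ n := by positivity
    linarith

/-- Deviation of the number of occurrences of `B` starting within the terms `1, …, v`. -/
lemma abs_sum_Icc_T_le {k : ℕ} (hk : 1 ≤ k) (B : Fin k → Fin 10) (v : ℕ) :
    |∑ i ∈ Finset.Icc 1 (T v), ((if ∀ j : Fin k, digit champ (i + (j : ℕ)) = (B j : ℕ)
      then (1 : ℝ) else 0) - 1 / 10 ^ k)| ≤ (k + 10) * 10 ^ (Nat.digits 10 v).length := by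
  set n := (Nat.digits 10 v).length with hn
  set f : ℕ → ℝ := fun i => (if ∀ j : Fin k, digit champ (i + (j : ℕ)) = (B j : ℕ)
      then (1 : ℝ) else 0) - 1 / 10 ^ k with hf
  have hswap : ∑ i ∈ Finset.Icc 1 (T v), f i =
      ∑ e ∈ Finset.range n, ∑ y ∈ Finset.Ico (10 ^ e) (v + 1), f (T y - e) := by
    rw [sum_Icc_T]
    refine Finset.sum_comm' fun y e => ?_
    simp only [Finset.mem_Icc, Finset.mem_range, Finset.mem_Ico, hn, lt_length_digits_iff]
    have : 0 < 10 ^ e := by positivity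
    omega
  have hvn : (v : ℝ) ≤ 10 ^ n := by
    exact_mod_cast (Nat.lt_base_pow_length_digits (b := 10) (m := v) (by norm_num)).le
  have hterm : ∀ e ∈ Finset.range n, |∑ y ∈ Finset.Ico (10 ^ e) (v + 1), f (T y - e)| ≤
      (if e < k then (10 : ℝ) ^ n else 0) + 2 * 10 ^ (e + 1) := by
    intro e _
    by_cases hek : k - 1 ≤ e
    · have h1 : ∑ y ∈ Finset.Ico (10 ^ e) (v + 1), f (T y - e) =
          ∑ y ∈ Finset.Ico (10 ^ e) (v + 1),
            ((if y / 10 ^ (e + 1 - k) % 10 ^ k = blockVal B then (1 : ℝ) else 0) - 1 / 10 ^ k) := by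
        refine Finset.sum_congr rfl fun y hy => ?_
        rw [Finset.mem_Ico, ← lt_length_digits_iff] at hy
        simp only [hf, block_match_iff hk B hek hy.1]
      have h2 := abs_sum_Ico_div_mod_le (a := e + 1 - k) (k := k) (b := blockVal B)
        (Fin.is_lt _) (10 ^ e) (v + 1)
      rw [h1]
      rw [show e + 1 - k + k = e + 1 by omega] at h2
      refine h2.trans (le_add_of_nonneg_left ?_)
      split_ifs <;> positivity
    · rw [if_pos (by omega)]
      calc |∑ y ∈ Finset.Ico (10 ^ e) (v + 1), f (T y - e)|
          ≤ ∑ y ∈ Finset.Ico (10 ^ e) (v + 1), |f (T y - e)| := Finset.abs_sum_le_sum_abs _ _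
        _ ≤ ∑ y ∈ Finset.Ico (10 ^ e) (v + 1), (1 : ℝ) :=
            Finset.sum_le_sum fun y _ => abs_ite_sub_le_one _ _
        _ = ((v + 1 - 10 ^ e : ℕ) : ℝ) := by simp
        _ ≤ v := by
            have : 0 < 10 ^ e := by positivity
            exact_mod_cast (by omega : v + 1 - 10 ^ e ≤ v)
        _ ≤ 10 ^ n + 2 * 10 ^ (e + 1) := hvn.trans (le_add_of_nonneg_right (by positivity))
  have hcard : ∑ e ∈ Finset.range n, (if e < k then (10 : ℝ) ^ n else 0) ≤ k * 10 ^ n := by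
    rw [← Finset.sum_filter, Finset.sum_const, nsmul_eq_mul]
    gcongr
    calc ((Finset.range n).filter (· < k)).card ≤ (Finset.range k).card :=
          Finset.card_le_card fun e he => by simp at he ⊢; exact he.2
      _ = k := Finset.card_range k
  calc |∑ i ∈ Finset.Icc 1 (T v), f i|
      ≤ ∑ e ∈ Finset.range n, |∑ y ∈ Finset.Ico (10 ^ e) (v + 1), f (T y - e)| := by
        rw [hswap]
        exact Finset.abs_sum_le_sum_abs _ _
    _ ≤ ∑ e ∈ Finset.range n, ((if e < k then (10 : ℝ) ^ n else 0) + 2 * 10 ^ (e + 1)) :=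
        Finset.sum_le_sum hterm
    _ ≤ (k + 10) * 10 ^ n := by
        rw [Finset.sum_add_distrib]
        linarith [sum_range_two_mul_pow_le n]

lemma le_T_vOf (N : ℕ) : N ≤ T (vOf N) :=
  Nat.sInf_mem (s := {v | N ≤ T v}) ⟨N, le_T N⟩

lemma T_vOf_le (N : ℕ) : T (vOf N) ≤ N + nOf N := by
  unfold nOf
  cases h : vOf N with
  | zero => simp [T_zero]
  | succ v =>
    have : ¬ N ≤ T v := fun hv => by
      have : vOf N ≤ v := Nat.sInf_le hv
      omega
    rw [T_succ]
    omega

/-- Replacing `occ α B N` by a count of all starting positions up to `M ≥ N`. -/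
lemma abs_occ_sub_le {k : ℕ} (hk : 1 ≤ k) (α : ℝ) (B : Fin k → Fin 10) {N M : ℕ} (hNM : N ≤ M) :
    |((occ α B N : ℝ) - N / 10 ^ k) -
      ∑ i ∈ Finset.Icc 1 M, ((if ∀ j : Fin k, digit α (i + (j : ℕ)) = (B j : ℕ)
        then (1 : ℝ) else 0) - 1 / 10 ^ k)| ≤ (M - N : ℝ) + k := by
  set P : ℕ → Prop := fun i => ∀ j : Fin k, digit α (i + (j : ℕ)) = (B j : ℕ) with hP
  have hsub : (Finset.Icc 1 M).filter P ⊆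
      ((Finset.Icc 1 N).filter fun i => i + k ≤ N + 1 ∧ P i) ∪ Finset.Ioc (N + 1 - k) M := by
    intro i hi
    simp only [Finset.mem_union, Finset.mem_filter, Finset.mem_Icc, Finset.mem_Ioc] at hi ⊢
    by_cases h : i + k ≤ N + 1 ∧ i ≤ N
    · exact Or.inl ⟨⟨hi.1.1, h.2⟩, h.1, hi.2⟩
    · right
      omega
  have hsub' : ((Finset.Icc 1 N).filter fun i => i + k ≤ N + 1 ∧ P i) ⊆
      (Finset.Icc 1 M).filter P := by
    intro i hi
    simp only [Finset.mem_filter, Finset.mem_Icc] at hi ⊢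
    exact ⟨⟨hi.1.1, hi.1.2.trans hNM⟩, hi.2.2⟩
  have h1 : ((Finset.Icc 1 M).filter P).card + N ≤ occ α B N + (M + k) := by
    have h := (Finset.card_le_card hsub).trans (Finset.card_union_le _ _)
    rw [Nat.card_Ioc] at h
    change _ ≤ occ α B N + _ at h
    omega
  have h2 : occ α B N ≤ ((Finset.Icc 1 M).filter P).card := Finset.card_le_card hsub'
  have h1' : (((Finset.Icc 1 M).filter P).card : ℝ) + N ≤ occ α B N + (M + k) := by
    exact_mod_cast h1
  have h2' : (occ α B N : ℝ) ≤ ((Finset.Icc 1 M).filter P).card := by exact_mod_cast h2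
  have hMN : (0 : ℝ) ≤ M - N := sub_nonneg.2 (by exact_mod_cast hNM)
  have h3 : ((M : ℝ) - N) / 10 ^ k ≤ M - N :=
    div_le_self hMN (one_le_pow₀ (by norm_num))
  have h4 : (0 : ℝ) ≤ (M - N) / 10 ^ k := by positivity
  have hk0 : (0 : ℝ) ≤ k := by positivity
  rw [Finset.sum_sub_distrib, Finset.sum_boole, Finset.sum_const, Nat.card_Icc, nsmul_eq_mul,
    Nat.add_sub_cancel, mul_one_div]
  rw [sub_div] at h3 h4
  rw [abs_le]
  constructor <;> linarith

/-- For every `k ≥ 2` there is `C > 0`, independent of the block `B`, such that for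
every digit block `B` of length `k` and every `N ≥ 1`,
`|occ(c, B, N) − N·10^{−k}| ≤ C · 10^{n(N) − k}`. -/
theorem occ_champ_estimate (k : ℕ) (hk : 2 ≤ k) :
    ∃ C : ℝ, 0 < C ∧ ∀ (B : Fin k → Fin 10) (N : ℕ), 1 ≤ N →
      |(occ champ B N : ℝ) - (N : ℝ) / 10 ^ k| ≤
        C * (10 : ℝ) ^ ((nOf N : ℤ) - (k : ℤ)) := by
  refine ⟨(2 * k + 11) * 10 ^ k, by positivity, fun B N _ => ?_⟩
  have h1 := abs_occ_sub_le (by omega : 1 ≤ k) champ B (le_T_vOf N)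
  have h2 := abs_sum_Icc_T_le (by omega : 1 ≤ k) B (vOf N)
  have h3 : (T (vOf N) : ℝ) ≤ N + nOf N := by exact_mod_cast T_vOf_le N
  have h4 : (nOf N : ℝ) ≤ 10 ^ nOf N := by
    exact_mod_cast (Nat.lt_pow_self (by norm_num : 1 < 10)).le
  have h5 : (k : ℝ) ≤ k * 10 ^ nOf N :=
    le_mul_of_one_le_right (by positivity) (one_le_pow₀ (by norm_num))
  have h6 : (2 * k + 11) * 10 ^ k * (10 : ℝ) ^ ((nOf N : ℤ) - (k : ℤ)) =
      (2 * k + 11) * 10 ^ nOf N := by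
    rw [mul_assoc, zpow_sub₀ (by norm_num), zpow_natCast, zpow_natCast,
      mul_div_cancel₀ _ (by positivity)]
  rw [h6]
  change _ ≤ (k + 10) * (10 : ℝ) ^ nOf N at h2
  have h7 := abs_add_le _ _ |>.trans (add_le_add h1 h2)
  rw [sub_add_cancel] at h7
  linarith
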